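/- Let X_1, …, X_n be upper extended negatively dependent random variables in a sub-linear expectation space with dominating constant K ≥ 1 and 𝔼[X_k] ≤ 0 for each k. Set S_n = Σ_{k=1}^n X_k and B_n = Σ_{k=1}^n 𝔼[X_k²]. Then for all x > 0 and r > 0: 𝕍(S_n⁺ ≥ x) ≤ 𝕍(max_{k≤n} X_k⁺ ≥ x/r) + K·e^r·( r·B_n / (r·B_n + x²) )^r. -/

import Mathlib

open Filter MeasureTheory
open scoped ENNReal NNReal

noncomputable section

/-- A sub-linear expectation on `Ω`: a monotone, constant-preserving, sub-additive,
positively homogeneous functional on real random variables (with values in the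
extended reals, so that random variables without a finite expectation are allowed). -/
structure SublinearExp (Ω : Type) where
  E : (Ω → ℝ) → EReal
  mono : ∀ X Y : Ω → ℝ, (∀ ω, X ω ≤ Y ω) → E X ≤ E Y
  const_eq : ∀ c : ℝ, E (fun _ => c) = (c : EReal)
  subadd : ∀ X Y : Ω → ℝ, E (fun ω => X ω + Y ω) ≤ E X + E Y
  pos_homog : ∀ lam : ℝ, 0 ≤ lam → ∀ X : Ω → ℝ,
    E (fun ω => lam * X ω) = (lam : EReal) * E X

namespace SublinearExp

variable {Ω : Type}

/-- The conjugate expectation `ℰ[X] := −𝔼[−X]`. -/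
def cE (SL : SublinearExp Ω) (X : Ω → ℝ) : EReal := - SL.E fun ω => - X ω

/-- The upper capacity `𝕍(A) := inf{𝔼[ξ] : 1_A ≤ ξ}`. -/
def V (SL : SublinearExp Ω) (A : Set Ω) : ℝ :=
  sInf {x : ℝ | ∃ ξ : Ω → ℝ,
    (∀ ω, A.indicator (fun _ => (1 : ℝ)) ω ≤ ξ ω) ∧ SL.E ξ = (x : EReal)}

/-- The lower capacity `𝓋(A) := 1 − 𝕍(Aᶜ)`. -/
def vLow (SL : SublinearExp Ω) (A : Set Ω) : ℝ := 1 - SL.V Aᶜ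

/-- The Choquet integral `C_𝕍(X) := ∫₀^∞ 𝕍(X ≥ t) dt` (of a non-negative r.v.). -/
def Choquet (SL : SublinearExp Ω) (X : Ω → ℝ) : ℝ≥0∞ :=
  ∫⁻ t in Set.Ioi (0 : ℝ), ENNReal.ofReal (SL.V {ω | t ≤ X ω})

/-- The outer capacity `𝕍*(A) := inf{Σ_n 𝕍(A_n) : A ⊆ ∪_n A_n}`. -/
def Vout (SL : SublinearExp Ω) (A : Set Ω) : ℝ≥0∞ :=
  ⨅ (B : ℕ → Set Ω) (_ : A ⊆ ⋃ n, B n), ∑' n, ENNReal.ofReal (SL.V (B n))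

/-- The upper capacity is continuous: continuous from below and from above. -/
def ContinuousCapacity (SL : SublinearExp Ω) : Prop :=
  (∀ A : ℕ → Set Ω, Monotone A →
    Tendsto (fun n => SL.V (A n)) atTop (nhds (SL.V (⋃ n, A n)))) ∧
  (∀ A : ℕ → Set Ω, Antitone A →
    Tendsto (fun n => SL.V (A n)) atTop (nhds (SL.V (⋂ n, A n))))

/-- Bounded Lipschitz function on ℝ. -/
def IsBLip (g : ℝ → ℝ) : Prop :=
  (∃ L : NNReal, LipschitzWith L g) ∧ ∃ M : ℝ, ∀ x, |g x| ≤ M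

/-- Local Lipschitz function on ℝ: `|φ(x) − φ(y)| ≤ C(1+|x|^m+|y|^m)|x−y|`. -/
def IsLocLip (φ : ℝ → ℝ) : Prop :=
  ∃ (C : ℝ) (m : ℕ), ∀ x y : ℝ, |φ x - φ y| ≤ C * (1 + |x| ^ m + |y| ^ m) * |x - y|

/-- Upper extended negative dependence (finite family) with dominating constant `K`:
`𝔼[∏ g_i(X_i)] ≤ K ∏ 𝔼[g_i(X_i)]` for all non-negative bounded Lipschitz
non-decreasing `g_i`.  (Expectations of bounded functions are finite, whence
the `toReal`.) -/
def UENDFin (SL : SublinearExp Ω) (K : ℝ) {n : ℕ} (X : Fin n → Ω → ℝ) : Prop :=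
  ∀ g : Fin n → ℝ → ℝ, (∀ i, IsBLip (g i)) → (∀ i, Monotone (g i)) →
    (∀ i x, 0 ≤ g i x) →
    SL.E (fun ω => ∏ i, g i (X i ω)) ≤
      ((K * ∏ i, (SL.E fun ω => g i (X i ω)).toReal : ℝ) : EReal)

/-- Upper extended negative dependence for a sequence. -/
def UEND (SL : SublinearExp Ω) (K : ℝ) (X : ℕ → Ω → ℝ) : Prop :=
  ∀ n : ℕ, ∀ g : ℕ → ℝ → ℝ, (∀ i, IsBLip (g i)) → (∀ i, Monotone (g i)) →
    (∀ i x, 0 ≤ g i x) →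
    SL.E (fun ω => ∏ i ∈ Finset.range n, g i (X i ω)) ≤
      ((K * ∏ i ∈ Finset.range n, (SL.E fun ω => g i (X i ω)).toReal : ℝ) : EReal)

/-- Lower extended negative dependence for a sequence. -/
def LEND (SL : SublinearExp Ω) (K : ℝ) (X : ℕ → Ω → ℝ) : Prop :=
  ∀ n : ℕ, ∀ g : ℕ → ℝ → ℝ, (∀ i, IsBLip (g i)) → (∀ i, Antitone (g i)) →
    (∀ i x, 0 ≤ g i x) →
    SL.E (fun ω => ∏ i ∈ Finset.range n, g i (X i ω)) ≤
      ((K * ∏ i ∈ Finset.range n, (SL.E fun ω => g i (X i ω)).toReal : ℝ) : EReal)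

/-- Extended negative dependence = upper and lower END. -/
def END (SL : SublinearExp Ω) (K : ℝ) (X : ℕ → Ω → ℝ) : Prop :=
  UEND SL K X ∧ LEND SL K X

/-- Upper extended negative dependence under the conjugate expectation `ℰ`
(finite family). -/
def UENDFinConj (SL : SublinearExp Ω) (K : ℝ) {n : ℕ} (X : Fin n → Ω → ℝ) : Prop :=
  ∀ g : Fin n → ℝ → ℝ, (∀ i, IsBLip (g i)) → (∀ i, Monotone (g i)) →
    (∀ i x, 0 ≤ g i x) →
    SL.cE (fun ω => ∏ i, g i (X i ω)) ≤
      ((K * ∏ i, (SL.cE fun ω => g i (X i ω)).toReal : ℝ) : EReal)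

/-- Upper extended negative dependence under the conjugate expectation (sequence). -/
def UENDconj (SL : SublinearExp Ω) (K : ℝ) (X : ℕ → Ω → ℝ) : Prop :=
  ∀ n : ℕ, ∀ g : ℕ → ℝ → ℝ, (∀ i, IsBLip (g i)) → (∀ i, Monotone (g i)) →
    (∀ i x, 0 ≤ g i x) →
    SL.cE (fun ω => ∏ i ∈ Finset.range n, g i (X i ω)) ≤
      ((K * ∏ i ∈ Finset.range n, (SL.cE fun ω => g i (X i ω)).toReal : ℝ) : EReal)

/-- Lower extended negative dependence under the conjugate expectation (sequence). -/
def LENDconj (SL : SublinearExp Ω) (K : ℝ) (X : ℕ → Ω → ℝ) : Prop :=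
  ∀ n : ℕ, ∀ g : ℕ → ℝ → ℝ, (∀ i, IsBLip (g i)) → (∀ i, Antitone (g i)) →
    (∀ i x, 0 ≤ g i x) →
    SL.cE (fun ω => ∏ i ∈ Finset.range n, g i (X i ω)) ≤
      ((K * ∏ i ∈ Finset.range n, (SL.cE fun ω => g i (X i ω)).toReal : ℝ) : EReal)

/-- Extended negative dependence under the conjugate expectation. -/
def ENDconj (SL : SublinearExp Ω) (K : ℝ) (X : ℕ → Ω → ℝ) : Prop :=
  UENDconj SL K X ∧ LENDconj SL K X

/-- Extended independence of a sequence: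
`𝔼[∏ ψ_i(X_i)] = ∏ 𝔼[ψ_i(X_i)]` for non-negative local Lipschitz `ψ_i`,
whenever the expectations involved are finite. -/
def ExtIndep (SL : SublinearExp Ω) (X : ℕ → Ω → ℝ) : Prop :=
  ∀ n : ℕ, ∀ ψ : ℕ → ℝ → ℝ, (∀ i, IsLocLip (ψ i)) → (∀ i x, 0 ≤ ψ i x) →
    (∀ i ∈ Finset.range n, SL.E (fun ω => ψ i (X i ω)) ≠ ⊤) →
    SL.E (fun ω => ∏ i ∈ Finset.range n, ψ i (X i ω)) =
      ((∏ i ∈ Finset.range n, (SL.E fun ω => ψ i (X i ω)).toReal : ℝ) : EReal)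

/-- Extended independence of two random variables. -/
def ExtIndepPair (SL : SublinearExp Ω) (Y Z : Ω → ℝ) : Prop :=
  ∀ ψ₁ ψ₂ : ℝ → ℝ, IsLocLip ψ₁ → IsLocLip ψ₂ →
    (∀ x, 0 ≤ ψ₁ x) → (∀ x, 0 ≤ ψ₂ x) →
    SL.E (fun ω => ψ₁ (Y ω)) ≠ ⊤ → SL.E (fun ω => ψ₂ (Z ω)) ≠ ⊤ →
    SL.E (fun ω => ψ₁ (Y ω) * ψ₂ (Z ω)) =
      (((SL.E fun ω => ψ₁ (Y ω)).toReal * (SL.E fun ω => ψ₂ (Z ω)).toReal : ℝ) : EReal)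

/-- Identically distributed: `𝔼[φ(X_i)] = 𝔼[φ(X_1)]` for all local Lipschitz `φ`. -/
def IdentDist (SL : SublinearExp Ω) (X : ℕ → Ω → ℝ) : Prop :=
  ∀ (i : ℕ) (φ : ℝ → ℝ), IsLocLip φ →
    SL.E (fun ω => φ (X i ω)) = SL.E fun ω => φ (X 0 ω)

end SublinearExp

/-- `log x = ln(x ∨ e)`. -/
def paperLog (x : ℝ) : ℝ := Real.log (max x (Real.exp 1))

/-- `a_n = √(2 n log log n)` with the above convention for `log`. -/
def lilA (n : ℕ) : ℝ := Real.sqrt (2 * n * paperLog (paperLog n))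

/-! Chernoff's method after truncation. Off the event that some `X k ≥ y`, the sum `∑ k, X k` equals
`∑ k, min (X k) y`, and `1_{S ≥ x} ≤ e^{-tx} ∏ k, exp (t * min (X k) y)`, where each factor is a
nonnegative bounded Lipschitz nondecreasing function of `X k`, so that extended negative dependence
bounds the expectation of the product. Each factor is controlled by the first two moments because
`(e^u - 1 - u) / u²` is nondecreasing on the whole line: `exp (min u v) ≤ 1 + u + q(v) u²` for
`v ≥ 0`, with `q` this quotient. The choice `t y = log (1 + x y / B)` gives the bound
`e^{x/y} (B / (B + x y))^{x/y}`, and the theorem is the case `y = x / r`. -/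

/-- The function `q(u) = (e^u - 1 - u) / u²` governing exponential moments of variables bounded
above. It is encoded as the integral Taylor remainder, which gives `q(0) = 1 / 2` without division
and makes monotonicity immediate, the integrand being nondecreasing in `u`. -/
def expTaylorQuot (u : ℝ) : ℝ := ∫ s in (0 : ℝ)..1, (1 - s) * Real.exp (s * u)

theorem sq_mul_expTaylorQuot (u : ℝ) : u ^ 2 * expTaylorQuot u = Real.exp u - 1 - u := by
  have hderiv (s : ℝ) : HasDerivAt (fun s => ((1 - s) * u + 1) * Real.exp (s * u))
      (u ^ 2 * ((1 - s) * Real.exp (s * u))) s := by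
    have hlin := (((hasDerivAt_id s).const_sub 1).mul_const u).add_const 1
    have hexp := ((hasDerivAt_id s).mul_const u).exp
    exact (hlin.mul hexp).congr_deriv (by simp only [id_eq]; ring)
  rw [expTaylorQuot, ← intervalIntegral.integral_const_mul,
    intervalIntegral.integral_eq_sub_of_hasDerivAt (fun s _ => hderiv s)
      (Continuous.intervalIntegrable (by fun_prop) 0 1)]
  simp [sub_sub, add_comm]

theorem expTaylorQuot_nonneg (u : ℝ) : 0 ≤ expTaylorQuot u :=
  intervalIntegral.integral_nonneg zero_le_one fun _ hs =>
    mul_nonneg (sub_nonneg.2 hs.2) (Real.exp_pos _).le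

theorem monotone_expTaylorQuot : Monotone expTaylorQuot := fun u v huv => by
  refine intervalIntegral.integral_mono_on zero_le_one
    (Continuous.intervalIntegrable (by fun_prop) 0 1)
    (Continuous.intervalIntegrable (by fun_prop) 0 1) fun s hs => ?_
  have hs₀ : 0 ≤ s := hs.1
  have hs₁ : 0 ≤ 1 - s := sub_nonneg.2 hs.2
  gcongr

theorem exp_min_le_one_add_add_expTaylorQuot_mul_sq (u : ℝ) {v : ℝ} (hv : 0 ≤ v) :
    Real.exp (min u v) ≤ 1 + u + expTaylorQuot v * u ^ 2 := by
  have hsq : min u v ^ 2 ≤ u ^ 2 := by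
    rcases le_total u v with h | h
    · rw [min_eq_left h]
    · rw [min_eq_right h]
      gcongr
  calc Real.exp (min u v) = 1 + min u v + expTaylorQuot (min u v) * min u v ^ 2 := by
        linarith [sq_mul_expTaylorQuot (min u v)]
    _ ≤ 1 + u + expTaylorQuot v * u ^ 2 := by
        gcongr
        · exact min_le_left u v
        · exact expTaylorQuot_nonneg v
        · exact monotone_expTaylorQuot (min_le_right u v)

theorem exists_exp_expTaylorQuot_sub_le {B x y : ℝ} (hB : 0 < B) (hx : 0 < x) (hy : 0 < y) :
    ∃ t : ℝ, 0 ≤ t ∧ Real.exp (expTaylorQuot (t * y) * t ^ 2 * B - t * x) ≤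
      Real.exp (x / y) * (B / (B + x * y)) ^ (x / y) := by
  set v := Real.log (1 + x * y / B)
  have hv₀ : 0 ≤ v := Real.log_nonneg (le_add_of_nonneg_right (by positivity))
  have hexp : Real.exp v = 1 + x * y / B := Real.exp_log (by positivity)
  have hbase : B / (B + x * y) = Real.exp (-v) := by
    rw [Real.exp_neg, hexp]
    field_simp
  refine ⟨v / y, by positivity, ?_⟩
  rw [hbase, ← Real.exp_mul, ← Real.exp_add, Real.exp_le_exp, div_mul_cancel₀ v hy.ne']
  calc expTaylorQuot v * (v / y) ^ 2 * B - v / y * x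
      = v ^ 2 * expTaylorQuot v * B / y ^ 2 - v / y * x := by ring
    _ = x / y + -v * (x / y) - v * B / y ^ 2 := by
        rw [sq_mul_expTaylorQuot, hexp]
        field_simp
        ring
    _ ≤ x / y + -v * (x / y) := sub_le_self _ (by positivity)

theorem coe_sum_toReal_le_sum {ι : Type*} (s : Finset ι) {f : ι → EReal}
    (hf : ∀ i ∈ s, f i ≠ ⊥) : ((∑ i ∈ s, (f i).toReal : ℝ) : EReal) ≤ ∑ i ∈ s, f i :=
  calc ((∑ i ∈ s, (f i).toReal : ℝ) : EReal) = ∑ i ∈ s, ((f i).toReal : EReal) :=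
        map_sum (⟨⟨Real.toEReal, EReal.coe_zero⟩, EReal.coe_add⟩ : ℝ →+ EReal) _ s
    _ ≤ ∑ i ∈ s, f i := Finset.sum_le_sum fun i hi => EReal.coe_toReal_le (hf i hi)

namespace SublinearExp

theorem isBLip_exp_comp {f : ℝ → ℝ} {L : ℝ≥0} {c : ℝ} (hf : LipschitzWith L f)
    (hfc : ∀ z, f z ≤ c) : IsBLip fun z => Real.exp (f z) := by
  have hexp : LipschitzOnWith (Real.exp c).toNNReal Real.exp (Set.Iic c) := by
    refine (convex_Iic c).lipschitzOnWith_of_nnnorm_deriv_le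
      (fun z _ => Real.differentiableAt_exp) fun z hz => ?_
    rw [Real.deriv_exp, Real.le_toNNReal_iff_coe_le (Real.exp_pos c).le, coe_nnnorm,
      Real.norm_eq_abs, Real.abs_exp]
    exact Real.exp_le_exp.2 hz
  refine ⟨⟨_, lipschitzOnWith_univ.1 (hexp.comp hf.lipschitzOnWith fun z _ => hfc z)⟩,
    Real.exp c, fun z => ?_⟩
  rw [Real.abs_exp]
  exact Real.exp_le_exp.2 (hfc z)

theorem isBLip_exp_mul_min {t : ℝ} (ht : 0 ≤ t) (y : ℝ) :
    IsBLip fun z => Real.exp (t * min z y) :=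
  isBLip_exp_comp ((lipschitzWith_smul t).comp (LipschitzWith.id.min_const y)) fun z =>
    mul_le_mul_of_nonneg_left (min_le_right z y) ht

variable {Ω : Type} (SL : SublinearExp Ω)

theorem E_nonneg {ξ : Ω → ℝ} (hξ : ∀ ω, 0 ≤ ξ ω) : 0 ≤ SL.E ξ :=
  (SL.const_eq 0).symm.trans_le (SL.mono _ ξ hξ)

theorem E_ne_bot {ξ : Ω → ℝ} (hξ : ∀ ω, 0 ≤ ξ ω) : SL.E ξ ≠ ⊥ :=
  ne_bot_of_le_ne_bot EReal.zero_ne_bot (SL.E_nonneg hξ)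

/-- The values `𝔼[ξ]` over the random variables `ξ ≥ 1_A` of finite expectation: the set of which
`SL.V A` is the infimum. -/
def dominatingValues (A : Set Ω) : Set ℝ :=
  {v | ∃ ξ : Ω → ℝ, (∀ ω, A.indicator (fun _ => (1 : ℝ)) ω ≤ ξ ω) ∧ SL.E ξ = (v : EReal)}

theorem nonempty_dominatingValues (A : Set Ω) : (SL.dominatingValues A).Nonempty :=
  ⟨1, fun _ => 1, Set.indicator_le_self' fun _ _ => zero_le_one, SL.const_eq 1⟩

theorem nonneg_of_indicator_le {A : Set Ω} {ξ : Ω → ℝ}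
    (hξ : ∀ ω, A.indicator (fun _ => (1 : ℝ)) ω ≤ ξ ω) (ω : Ω) : 0 ≤ ξ ω :=
  (Set.indicator_nonneg (fun _ _ => zero_le_one) ω).trans (hξ ω)

theorem bddBelow_dominatingValues (A : Set Ω) : BddBelow (SL.dominatingValues A) := by
  refine ⟨0, ?_⟩
  rintro v ⟨ξ, hξ, hv⟩
  exact EReal.coe_nonneg.1 (hv ▸ SL.E_nonneg (nonneg_of_indicator_le hξ))

theorem V_le_of_indicator_le {A : Set Ω} {ξ : Ω → ℝ} {c : ℝ}
    (hξ : ∀ ω, A.indicator (fun _ => (1 : ℝ)) ω ≤ ξ ω) (hc : SL.E ξ ≤ c) : SL.V A ≤ c := by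
  have hcoe : ((SL.E ξ).toReal : EReal) = SL.E ξ :=
    EReal.coe_toReal (ne_top_of_le_ne_top (EReal.coe_ne_top c) hc)
      (SL.E_ne_bot (nonneg_of_indicator_le hξ))
  refine (csInf_le (SL.bddBelow_dominatingValues A) ⟨ξ, hξ, hcoe.symm⟩).trans ?_
  rwa [← EReal.coe_le_coe_iff, hcoe]

theorem V_mono {A A' : Set Ω} (hA : A ⊆ A') : SL.V A ≤ SL.V A' :=
  csInf_le_csInf (SL.bddBelow_dominatingValues A) (SL.nonempty_dominatingValues A')
    fun _ ⟨ξ, hξ, hv⟩ => ⟨ξ, fun ω =>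
      (Set.indicator_le_indicator_of_subset hA (fun _ => zero_le_one) ω).trans (hξ ω), hv⟩

open scoped Pointwise in
theorem V_union_le (A A' : Set Ω) : SL.V (A ∪ A') ≤ SL.V A + SL.V A' := by
  have hsInf : SL.V A + SL.V A' = sInf (SL.dominatingValues A + SL.dominatingValues A') :=
    (csInf_add (SL.nonempty_dominatingValues A) (SL.bddBelow_dominatingValues A)
      (SL.nonempty_dominatingValues A') (SL.bddBelow_dominatingValues A')).symm
  rw [hsInf]
  refine le_csInf ((SL.nonempty_dominatingValues A).add (SL.nonempty_dominatingValues A')) ?_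
  rintro _ ⟨v, ⟨ξ, hξ, hv⟩, w, ⟨η, hη, hw⟩, rfl⟩
  refine SL.V_le_of_indicator_le (ξ := fun ω => ξ ω + η ω)
    (Set.indicator_le' ?_ fun ω _ =>
      add_nonneg (nonneg_of_indicator_le hξ ω) (nonneg_of_indicator_le hη ω)) ?_
  · rintro ω (hω | hω)
    · have hξω : 1 ≤ ξ ω := (Set.indicator_of_mem hω _).symm.trans_le (hξ ω)
      exact le_add_of_le_of_nonneg hξω (nonneg_of_indicator_le hη ω)
    · have hηω : 1 ≤ η ω := (Set.indicator_of_mem hω _).symm.trans_le (hη ω)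
      exact le_add_of_nonneg_of_le (nonneg_of_indicator_le hξ ω) hηω
  · rw [EReal.coe_add, ← hv, ← hw]
    exact SL.subadd ξ η

theorem V_le_V_add_V_sdiff (A M : Set Ω) : SL.V A ≤ SL.V M + SL.V (A \ M) :=
  calc SL.V A ≤ SL.V (M ∪ A \ M) :=
        SL.V_mono (by rw [Set.union_sdiff_self]; exact Set.subset_union_right)
    _ ≤ SL.V M + SL.V (A \ M) := SL.V_union_le M (A \ M)

variable {SL}

theorem E_exp_mul_min_le {Y : Ω → ℝ} {t y : ℝ} (hmean : SL.E Y ≤ 0)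
    (hvar : (SL.E fun ω => Y ω ^ 2) ≠ ⊤) (ht : 0 ≤ t) (hy : 0 ≤ y) :
    (SL.E fun ω => Real.exp (t * min (Y ω) y)) ≤
      ((1 + expTaylorQuot (t * y) * t ^ 2 * (SL.E fun ω => Y ω ^ 2).toReal : ℝ) : EReal) := by
  set c := expTaylorQuot (t * y) * t ^ 2
  have hc : 0 ≤ c := mul_nonneg (expTaylorQuot_nonneg _) (sq_nonneg t)
  have hpoint (ω : Ω) : Real.exp (t * min (Y ω) y) ≤ 1 + (t * Y ω + c * Y ω ^ 2) := by
    rw [mul_min_of_nonneg _ _ ht]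
    exact (exp_min_le_one_add_add_expTaylorQuot_mul_sq _ (mul_nonneg ht hy)).trans_eq (by ring)
  calc (SL.E fun ω => Real.exp (t * min (Y ω) y))
      ≤ SL.E fun ω => 1 + (t * Y ω + c * Y ω ^ 2) := SL.mono _ _ hpoint
    _ ≤ (SL.E fun _ => 1) + ((SL.E fun ω => t * Y ω) + SL.E fun ω => c * Y ω ^ 2) :=
        (SL.subadd _ _).trans (add_le_add_right (SL.subadd _ _) _)
    _ = (1 : ℝ) + (t * SL.E Y + c * SL.E fun ω => Y ω ^ 2) := by
        rw [SL.const_eq, SL.pos_homog t ht, SL.pos_homog c hc]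
    _ ≤ (1 : ℝ) + (0 + c * SL.E fun ω => Y ω ^ 2) := by
        gcongr
        exact EReal.mul_nonpos_iff.2 (Or.inl ⟨EReal.coe_nonneg.2 ht, hmean⟩)
    _ = ((1 + c * (SL.E fun ω => Y ω ^ 2).toReal : ℝ) : EReal) := by
        rw [zero_add, EReal.coe_add, EReal.coe_mul c,
          EReal.coe_toReal hvar (SL.E_ne_bot fun ω => sq_nonneg (Y ω))]

namespace UENDFin

variable {n : ℕ} {X : Fin n → Ω → ℝ} {K B x y t : ℝ}

theorem one_le (hX : UENDFin SL K X) : 1 ≤ K := by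
  have h := hX (fun _ _ => 1) (fun _ => ⟨⟨0, LipschitzWith.const 1⟩, 1, fun _ => abs_one.le⟩)
    (fun _ => monotone_const) fun _ _ => zero_le_one
  simpa only [Finset.prod_const_one, SL.const_eq, EReal.toReal_coe, mul_one,
    EReal.coe_le_coe_iff] using h

theorem E_prod_exp_mul_min_le (hX : UENDFin SL K X) (hmean : ∀ k, SL.E (X k) ≤ 0)
    (hB : ∑ k, SL.E (fun ω => X k ω ^ 2) ≤ B) (ht : 0 ≤ t) (hy : 0 ≤ y) :
    (SL.E fun ω => ∏ k, Real.exp (t * min (X k ω) y)) ≤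
      ((K * Real.exp (expTaylorQuot (t * y) * t ^ 2 * B) : ℝ) : EReal) := by
  set c := expTaylorQuot (t * y) * t ^ 2
  set b : Fin n → ℝ := fun k => (SL.E fun ω => X k ω ^ 2).toReal
  have hK : 0 ≤ K := zero_le_one.trans hX.one_le
  have hc : 0 ≤ c := mul_nonneg (expTaylorQuot_nonneg _) (sq_nonneg t)
  have hsq (k : Fin n) : 0 ≤ SL.E fun ω => X k ω ^ 2 := SL.E_nonneg fun ω => sq_nonneg (X k ω)
  have hvar (k : Fin n) : (SL.E fun ω => X k ω ^ 2) ≠ ⊤ :=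
    ne_top_of_le_ne_top (EReal.coe_ne_top B)
      ((Finset.single_le_sum (fun i _ => hsq i) (Finset.mem_univ k)).trans hB)
  have hbB : ∑ k, b k ≤ B := EReal.coe_le_coe_iff.1 <|
    (coe_sum_toReal_le_sum _ fun k _ => SL.E_ne_bot fun ω => sq_nonneg (X k ω)).trans hB
  have hexp (k : Fin n) : 0 ≤ SL.E fun ω => Real.exp (t * min (X k ω) y) :=
    SL.E_nonneg fun ω => (Real.exp_pos _).le
  have hmoment (k : Fin n) :
      (SL.E fun ω => Real.exp (t * min (X k ω) y)).toReal ≤ Real.exp (c * b k) :=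
    calc (SL.E fun ω => Real.exp (t * min (X k ω) y)).toReal ≤ 1 + c * b k :=
          EReal.toReal_le_toReal (E_exp_mul_min_le (hmean k) (hvar k) ht hy)
            (ne_bot_of_le_ne_bot EReal.zero_ne_bot (hexp k)) (EReal.coe_ne_top _)
      _ ≤ Real.exp (c * b k) := by linarith [Real.add_one_le_exp (c * b k)]
  refine (hX (fun _ z => Real.exp (t * min z y)) (fun _ => isBLip_exp_mul_min ht y)
    (fun _ a a' haa' => Real.exp_le_exp.2 (by gcongr)) fun _ _ => (Real.exp_pos _).le).trans ?_
  rw [EReal.coe_le_coe_iff]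
  gcongr
  calc ∏ k, (SL.E fun ω => Real.exp (t * min (X k ω) y)).toReal ≤ ∏ k, Real.exp (c * b k) :=
        Finset.prod_le_prod (fun k _ => EReal.toReal_nonneg (hexp k)) fun k _ => hmoment k
    _ = Real.exp (c * ∑ k, b k) := by rw [Finset.mul_sum, Real.exp_sum]
    _ ≤ Real.exp (c * B) := by gcongr

theorem V_sum_sdiff_le (hX : UENDFin SL K X) (hmean : ∀ k, SL.E (X k) ≤ 0)
    (hB : ∑ k, SL.E (fun ω => X k ω ^ 2) ≤ B) (ht : 0 ≤ t) (hy : 0 ≤ y) :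
    SL.V ({ω | x ≤ ∑ k, X k ω} \ {ω | ∃ k, y ≤ X k ω}) ≤
      K * Real.exp (expTaylorQuot (t * y) * t ^ 2 * B - t * x) := by
  refine SL.V_le_of_indicator_le
    (ξ := fun ω => Real.exp (-(t * x)) * ∏ k, Real.exp (t * min (X k ω) y)) ?_ ?_
  · refine Set.indicator_le' ?_ fun ω _ => by positivity
    rintro ω ⟨hsum : x ≤ ∑ k, X k ω, hmax⟩
    have hmin (k : Fin n) : min (X k ω) y = X k ω :=
      min_eq_left (le_of_not_ge fun hk => hmax ⟨k, hk⟩)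
    simp only [hmin]
    rw [← Real.exp_sum, ← Finset.mul_sum, ← Real.exp_add, neg_add_eq_sub, ← mul_sub]
    exact Real.one_le_exp (mul_nonneg ht (sub_nonneg.2 hsum))
  · rw [SL.pos_homog _ (Real.exp_pos _).le, sub_eq_neg_add, Real.exp_add, mul_left_comm,
      EReal.coe_mul]
    gcongr
    exact hX.E_prod_exp_mul_min_le hmean hB ht hy

theorem V_sum_le_of_pos (hX : UENDFin SL K X) (hmean : ∀ k, SL.E (X k) ≤ 0)
    (hB : ∑ k, SL.E (fun ω => X k ω ^ 2) ≤ B) (hB₀ : 0 < B) (hx : 0 < x) (hy : 0 < y) :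
    SL.V {ω | x ≤ ∑ k, X k ω} ≤ SL.V {ω | ∃ k, y ≤ X k ω} +
      K * (Real.exp (x / y) * (B / (B + x * y)) ^ (x / y)) := by
  obtain ⟨t, ht, hle⟩ := exists_exp_expTaylorQuot_sub_le hB₀ hx hy
  have hK : 0 ≤ K := zero_le_one.trans hX.one_le
  refine (SL.V_le_V_add_V_sdiff _ {ω | ∃ k, y ≤ X k ω}).trans ?_
  gcongr
  exact (hX.V_sum_sdiff_le hmean hB ht hy.le).trans (by gcongr)

theorem V_sum_le (hX : UENDFin SL K X) (hmean : ∀ k, SL.E (X k) ≤ 0)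
    (hB : ∑ k, SL.E (fun ω => X k ω ^ 2) ≤ B) (hx : 0 < x) (hy : 0 < y) :
    SL.V {ω | x ≤ ∑ k, X k ω} ≤ SL.V {ω | ∃ k, y ≤ X k ω} +
      K * (Real.exp (x / y) * (B / (B + x * y)) ^ (x / y)) := by
  have hB₀ : 0 ≤ B := EReal.coe_nonneg.1 <|
    (Finset.sum_nonneg fun k _ => SL.E_nonneg fun ω => sq_nonneg (X k ω)).trans hB
  have hcont : ContinuousAt (fun B' : ℝ => SL.V {ω | ∃ k, y ≤ X k ω} +
      K * (Real.exp (x / y) * (B' / (B' + x * y)) ^ (x / y))) B := by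
    have hden : B + x * y ≠ 0 := by positivity
    have hbase : ContinuousAt (fun B' : ℝ => B' / (B' + x * y)) B := by
      fun_prop (disch := exact hden)
    exact (((hbase.rpow_const (Or.inr (by positivity))).const_mul _).const_mul _).const_add _
  -- `B = 0` would call for `t = ∞`, so the bound is taken at `B' > B` and `B' → B`.
  refine ge_of_tendsto (hcont.tendsto.mono_left (nhdsWithin_le_nhds (s := Set.Ioi B)))
    (eventually_nhdsWithin_of_forall fun B' (hB' : B < B') => ?_)
  exact hX.V_sum_le_of_pos hmean (hB.trans (EReal.coe_le_coe_iff.2 hB'.le)) (hB₀.trans_lt hB') hx hy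

end UENDFin

end SublinearExp

/-- Theorem 3.1(c), inequality (3.3): tail bound for `S_n⁺`. -/
theorem stmt2 {Ω : Type} (SL : SublinearExp Ω) (n : ℕ) (X : Fin n → Ω → ℝ)
    (K : ℝ) (hK : 1 ≤ K)
    (hUEND : SublinearExp.UENDFin SL K X)
    (hmean : ∀ k, SL.E (X k) ≤ 0)
    (B : ℝ) (hB : (B : EReal) = ∑ k, SL.E fun ω => (X k ω) ^ 2) :
    ∀ x r : ℝ, 0 < x → 0 < r →
      SL.V {ω | x ≤ max (∑ k, X k ω) 0} ≤
        SL.V {ω | ∃ k, x / r ≤ max (X k ω) 0} +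
          K * Real.exp r * (r * B / (r * B + x ^ 2)) ^ r := by
  intro x r hx hr
  have hy : 0 < x / r := div_pos hx hr
  have hbase : B / (B + x * (x / r)) = r * B / (r * B + x ^ 2) := by
    field_simp
  have hbound := hUEND.V_sum_le hmean hB.ge hx hy
  rw [div_div_cancel₀ hx.ne', hbase, ← mul_assoc] at hbound
  simpa only [le_max_iff, hx.not_ge, hy.not_ge, or_false] using hbound
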